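/- arXiv:1610.01118 — 6 statements merged into one kernel-verified Lean document; each statement's English description precedes it below -/
import Mathlib

section
/- Uniqueness of solutions to the centered many-server equations: if (κ₁, x₁) and (κ₂, x₂) are two pairs of continuous real-valued functions on [0,∞) that both solve the CMS equations associated with the same data (η, x₀, ζ), then κ₁(t) = κ₂(t) and x₁(t) = x₂(t) for all t ≥ 0. -/
/-!
Let `d = κ₁ - κ₂`. The second CMS equation gives `d = -(x₁⁺ - x₂⁺)`, and the first gives
`d - g ∗ d = min x₁ 0 - min x₂ 0`. Since `x ↦ x⁺` and `x ↦ min x 0` are both monotone, the two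
differences on the right never have opposite signs, so `d` and `d - g ∗ d` never have the same
strict sign; this forces `|d| ≤ |g ∗ d|` pointwise (`abs_le_of_min_max`). On a compact interval
`[0, T]` the density `g` is bounded by some `C`, whence `|d t| ≤ C ∫₀ᵗ |d|`, and Grönwall's
inequality gives `d = 0` (`eq_zero_of_abs_le_integral`). With `d = 0` the positive parts and the
negative parts of `x₁` and `x₂` agree, so `x₁ = x₂`.
-/

open MeasureTheory Set

/-- A pair `(κ, x)` solves the centered many-server (CMS) equations associated with
data `(η, x₀, ζ)` and service density `g` if for every `t ≥ 0`:
`min (x t) 0 = ζ t + κ t - ∫₀ᵗ g (t - s) κ s ds` and `κ t = η t - max (x t) 0 + max x₀ 0`. -/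
def SolvesCMS (g : ℝ → ℝ) (η : ℝ → ℝ) (x₀ : ℝ) (ζ : ℝ → ℝ) (κ x : ℝ → ℝ) : Prop :=
  ∀ t ≥ (0 : ℝ),
    (min (x t) 0 = ζ t + κ t - ∫ s in (0:ℝ)..t, g (t - s) * κ s) ∧
    κ t = η t - max (x t) 0 + max x₀ 0

/-- Since `max · 0` and `min · 0` are monotone: if `d` is minus the difference of the positive
parts of `a` and `b`, and `d - I` is the difference of `min a 0` and `min b 0`, then `|d| ≤ |I|`. -/
lemma abs_le_of_min_max {a b d I : ℝ} (hmin : min a 0 - min b 0 = d - I)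
    (hmax : d = -(max a 0 - max b 0)) : |d| ≤ |I| := by
  rcases le_total a b with hab | hab
  · have h1 : min a 0 ≤ min b 0 := min_le_min_right 0 hab
    have h2 : max a 0 ≤ max b 0 := max_le_max_right 0 hab
    rw [abs_of_nonneg (by linarith : 0 ≤ d)]
    exact le_trans (by linarith) (le_abs_self I)
  · have h1 : min b 0 ≤ min a 0 := min_le_min_right 0 hab
    have h2 : max b 0 ≤ max a 0 := max_le_max_right 0 hab
    rw [abs_of_nonpos (by linarith : d ≤ 0)]
    exact le_trans (by linarith) (neg_abs_le I |> neg_le.mp)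

/-- Grönwall's inequality in integral form, with zero initial term. -/
lemma eq_zero_of_abs_le_integral {d : ℝ → ℝ} (hd : ContinuousOn d (Ici 0)) {C T : ℝ}
    (hT : 0 ≤ T) (h : ∀ t ∈ Icc 0 T, |d t| ≤ C * ∫ s in (0:ℝ)..t, |d s|) : d T = 0 := by
  -- Extending `d` by the constant `d 0` to the left makes the integrand continuous on all of `ℝ`.
  set u : ℝ → ℝ := fun s => |d (max s 0)| with hu
  have hu_cont : Continuous u :=
    (hd.comp_continuous (by fun_prop) (fun s => le_max_right s 0)).abs
  have hF : ∀ t, 0 ≤ t → ∫ s in (0:ℝ)..t, u s = ∫ s in (0:ℝ)..t, |d s| := by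
    intro t ht
    refine intervalIntegral.integral_congr fun s hs => ?_
    rw [uIcc_of_le ht] at hs
    simp only [hu, max_eq_left hs.1]
  have hderiv : ∀ t, HasDerivAt (fun t => ∫ s in (0:ℝ)..t, u s) (u t) t :=
    fun t => (hu_cont.integral_hasStrictDerivAt 0 t).hasDerivAt
  have hzero := eq_zero_of_abs_deriv_le_mul_abs_self_of_eq_zero_right (K := C) (a := 0) (b := T)
    (f := fun t => ∫ s in (0:ℝ)..t, u s) (f' := u)
    (fun t _ => (hderiv t).continuousAt.continuousWithinAt)
    (fun t _ => (hderiv t).hasDerivWithinAt) (by simp) (by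
      intro t ht
      have hnn : 0 ≤ ∫ s in (0:ℝ)..t, u s :=
        intervalIntegral.integral_nonneg ht.1 fun s _ => abs_nonneg _
      rw [Real.norm_of_nonneg (abs_nonneg _ : 0 ≤ u t), Real.norm_of_nonneg hnn, hF t ht.1]
      simpa only [hu, max_eq_left ht.1] using h t ⟨ht.1, ht.2.le⟩)
    T ⟨hT, le_rfl⟩
  have hle := h T ⟨hT, le_rfl⟩
  rw [← hF T hT, hzero, mul_zero] at hle
  exact abs_nonpos_iff.mp hle

/-- Uniqueness of continuous solutions to the centered many-server equations. -/
theorem cms_unique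
    (g : ℝ → ℝ) (hg_cont : ContinuousOn g (Ici 0))
    (hg_nonneg : ∀ x ≥ (0:ℝ), 0 ≤ g x)
    (hg_integrable : IntegrableOn g (Ioi 0))
    (hg_int : (∫ x in Ioi (0:ℝ), g x) ≤ 1)
    (x₀ : ℝ) (η ζ : ℝ → ℝ)
    (hη : ContinuousOn η (Ici 0)) (hζ : ContinuousOn ζ (Ici 0))
    (hη0 : η 0 = 0) (hζ0 : ζ 0 = min x₀ 0)
    (κ₁ x₁ κ₂ x₂ : ℝ → ℝ)
    (hκ₁ : ContinuousOn κ₁ (Ici 0)) (hx₁ : ContinuousOn x₁ (Ici 0))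
    (hκ₂ : ContinuousOn κ₂ (Ici 0)) (hx₂ : ContinuousOn x₂ (Ici 0))
    (h₁ : SolvesCMS g η x₀ ζ κ₁ x₁) (h₂ : SolvesCMS g η x₀ ζ κ₂ x₂) :
    ∀ t ≥ (0:ℝ), κ₁ t = κ₂ t ∧ x₁ t = x₂ t := by
  have hd : ContinuousOn (fun s => κ₁ s - κ₂ s) (Ici 0) := hκ₁.sub hκ₂
  have hg_refl : ∀ t : ℝ, ContinuousOn (fun s => g (t - s)) (Icc 0 t) := fun t =>
    hg_cont.comp (by fun_prop) fun s hs => sub_nonneg.mpr hs.2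
  have hint : ∀ {κ : ℝ → ℝ}, ContinuousOn κ (Ici 0) → ∀ t : ℝ, 0 ≤ t →
      IntervalIntegrable (fun s => g (t - s) * κ s) volume 0 t := fun hκ t ht =>
    ((hg_refl t).mul (hκ.mono Icc_subset_Ici_self)).intervalIntegrable_of_Icc ht
  have hbound : ∀ t ≥ (0:ℝ),
      |κ₁ t - κ₂ t| ≤ |∫ s in (0:ℝ)..t, g (t - s) * (κ₁ s - κ₂ s)| := by
    intro t ht
    have hsub : ∫ s in (0:ℝ)..t, g (t - s) * (κ₁ s - κ₂ s) =
        (∫ s in (0:ℝ)..t, g (t - s) * κ₁ s) - ∫ s in (0:ℝ)..t, g (t - s) * κ₂ s := by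
      simp only [mul_sub]
      exact intervalIntegral.integral_sub (hint hκ₁ t ht) (hint hκ₂ t ht)
    obtain ⟨hmin₁, hmax₁⟩ := h₁ t ht
    obtain ⟨hmin₂, hmax₂⟩ := h₂ t ht
    refine abs_le_of_min_max (a := x₁ t) (b := x₂ t) ?_ ?_
    · rw [hsub]; linarith
    · linarith
  have hκ : ∀ t ≥ (0:ℝ), κ₁ t = κ₂ t := by
    intro T hT
    obtain ⟨C, hC⟩ := isCompact_Icc.exists_bound_of_continuousOn
      (hg_cont.mono (Icc_subset_Ici_self : Icc 0 T ⊆ Ici 0))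
    refine sub_eq_zero.mp (eq_zero_of_abs_le_integral hd (C := C) hT fun t ht => ?_)
    refine (hbound t ht.1).trans ?_
    rw [← intervalIntegral.integral_const_mul, ← Real.norm_eq_abs]
    refine intervalIntegral.norm_integral_le_of_norm_le ht.1 (ae_of_all _ fun s hs => ?_) ?_
    · rw [norm_mul, Real.norm_eq_abs (κ₁ s - κ₂ s)]
      exact mul_le_mul_of_nonneg_right
        (hC (t - s) ⟨by linarith [hs.2], by linarith [hs.1, ht.2]⟩) (abs_nonneg _)
    · exact ((hd.mono Icc_subset_Ici_self).abs.intervalIntegrable_of_Icc ht.1).const_mul C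
  intro t ht
  refine ⟨hκ t ht, ?_⟩
  obtain ⟨hmin₁, hmax₁⟩ := h₁ t ht
  obtain ⟨hmin₂, hmax₂⟩ := h₂ t ht
  have hI : ∫ s in (0:ℝ)..t, g (t - s) * κ₁ s = ∫ s in (0:ℝ)..t, g (t - s) * κ₂ s := by
    refine intervalIntegral.integral_congr fun s hs => ?_
    rw [uIcc_of_le ht] at hs
    simp only [hκ s hs.1]
  have hκt := hκ t ht
  rw [hI] at hmin₁
  -- Each `x t` is the sum of its positive part and `min (x t) 0`.
  linarith [min_add_max (x₁ t) 0, min_add_max (x₂ t) 0]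
end

section
/- Existence of solutions to the centered many-server equations for continuous input: for every x₀ ∈ ℝ and continuous functions η, ζ : [0,∞) → ℝ with η(0) = 0 and ζ(0) = min(x₀,0), there exists a pair (κ, x) of continuous real-valued functions on [0,∞) with κ(0) = 0 that solves the CMS equations associated with (η, x₀, ζ). -/
/-!
Adding the two CMS equations gives `x = ζ + η + max x₀ 0 - g ∗ κ`, where
`(g ∗ κ) t = ∫₀ᵗ g (t - s) κ s ds`. Substituting this back, the system is equivalent to the single
nonlinear Volterra equation
`κ = min (g ∗ κ - ζ) (η + max x₀ 0)`.
Since `min` is 1-Lipschitz and `g` is bounded on compact intervals, Picard iteration converges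
locally uniformly: if `|g| ≤ M` on `[0, T]`, successive iterates differ at `t ∈ [0, T]` by at most
`C * (1/2)^n * exp (2 M t)` (`picard_step_bound`). The limit is continuous and solves the
Volterra equation (`volterra_exists`). At `t = 0` the equation reads
`κ 0 = min (-min x₀ 0) (max x₀ 0) = 0`.
-/

open MeasureTheory Set

/-- Picard iterates, started from `0`, of the map
`u ↦ min (t ↦ ∫₀ᵗ G (t - s) u s ds - Z t) E`. -/
noncomputable def picard (G E Z : ℝ → ℝ) : ℕ → ℝ → ℝ
  | 0 => fun _ => 0
  | n + 1 => fun t => min ((∫ s in (0:ℝ)..t, G (t - s) * picard G E Z n s) - Z t) (E t)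

lemma picard_continuous {G E Z : ℝ → ℝ} (hG : Continuous G) (hE : Continuous E)
    (hZ : Continuous Z) (n : ℕ) : Continuous (picard G E Z n) := by
  induction n with
  | zero => exact continuous_const
  | succ n ih =>
    have h : Continuous fun t : ℝ => ∫ s in (0:ℝ)..t, G (t - s) * picard G E Z n s := by
      apply intervalIntegral.continuous_parametric_intervalIntegral_of_continuous
        (f := fun t s => G (t - s) * picard G E Z n s) _ continuous_id
      simp only [Function.uncurry_def]
      fun_prop
    exact (h.sub hZ).min hE

/-- The exponential weight `exp (2 M t)` turns the Picard map into a contraction with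
factor `1/2` on `[0, T]`. -/
lemma picard_step_bound {G E Z : ℝ → ℝ} (hG : Continuous G) (hE : Continuous E)
    (hZ : Continuous Z) {T M C : ℝ} (hM : 0 < M) (hC : 0 ≤ C)
    (hGM : ∀ t ∈ Icc 0 T, |G t| ≤ M) (hC1 : ∀ t ∈ Icc 0 T, |picard G E Z 1 t| ≤ C) (n : ℕ) :
    ∀ t ∈ Icc 0 T, |picard G E Z n t - picard G E Z (n + 1) t|
      ≤ C * (1 / 2) ^ n * Real.exp (2 * M * t) := by
  induction n with
  | zero =>
    intro t ht
    have h1 : (1:ℝ) ≤ Real.exp (2 * M * t) :=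
      Real.one_le_exp (mul_nonneg (by positivity) ht.1)
    have h0 : picard G E Z 0 t = 0 := rfl
    rw [h0, zero_sub, abs_neg, pow_zero, mul_one]
    exact (hC1 t ht).trans (le_mul_of_one_le_right hC h1)
  | succ n ih =>
    intro t ht
    have hc := picard_continuous hG hE hZ
    have hint : ∀ k, IntervalIntegrable (fun s => G (t - s) * picard G E Z k s) volume 0 t :=
      fun k => ((hG.comp (continuous_const.sub continuous_id)).mul (hc k)).intervalIntegrable _ _
    have hmin : |picard G E Z (n + 1) t - picard G E Z (n + 1 + 1) t| ≤
        |(∫ s in (0:ℝ)..t, G (t - s) * picard G E Z n s)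
          - ∫ s in (0:ℝ)..t, G (t - s) * picard G E Z (n + 1) s| := by
      refine (abs_min_sub_min_le_max _ _ _ _).trans ?_
      simp
    refine hmin.trans ?_
    rw [← intervalIntegral.integral_sub (hint n) (hint (n + 1)), ← Real.norm_eq_abs]
    have hbd : ‖∫ s in (0:ℝ)..t, (G (t - s) * picard G E Z n s
          - G (t - s) * picard G E Z (n + 1) s)‖
        ≤ ∫ s in (0:ℝ)..t, M * (C * (1 / 2) ^ n) * Real.exp (2 * M * s) := by
      apply intervalIntegral.norm_integral_le_of_norm_le ht.1
      · refine Filter.Eventually.of_forall fun s hs => ?_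
        rw [← mul_sub, Real.norm_eq_abs, abs_mul, mul_assoc]
        exact mul_le_mul (hGM _ ⟨by linarith [hs.2], by linarith [hs.1, ht.2]⟩)
          (ih s ⟨hs.1.le, hs.2.trans ht.2⟩) (abs_nonneg _) hM.le
      · exact Continuous.intervalIntegrable (by fun_prop) _ _
    refine hbd.trans ?_
    have hexp : ∫ s in (0:ℝ)..t, Real.exp (2 * M * s)
        = (2 * M)⁻¹ * (Real.exp (2 * M * t) - 1) := by
      rw [intervalIntegral.integral_comp_mul_left _ (by positivity : 2 * M ≠ 0)]
      simp
    rw [intervalIntegral.integral_const_mul, hexp, pow_succ]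
    have : M * (C * (1 / 2) ^ n) * ((2 * M)⁻¹ * (Real.exp (2 * M * t) - 1))
        = C * ((1 / 2) ^ n * (1 / 2)) * (Real.exp (2 * M * t) - 1) := by
      field_simp
    rw [this]
    exact mul_le_mul_of_nonneg_left (by linarith) (by positivity)

lemma picard_geometric {G E Z : ℝ → ℝ} (hG : Continuous G) (hE : Continuous E)
    (hZ : Continuous Z) (T : ℝ) : ∃ K M : ℝ, (∀ t ∈ Icc 0 T, |G t| ≤ M) ∧ ∀ n, ∀ t ∈ Icc 0 T,
      dist (picard G E Z n t) (picard G E Z (n + 1) t) ≤ K * (1 / 2) ^ n := by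
  obtain ⟨M, hM⟩ := (isCompact_Icc (a := (0:ℝ)) (b := T)).exists_bound_of_continuousOn
    hG.continuousOn
  obtain ⟨C, hC⟩ := (isCompact_Icc (a := (0:ℝ)) (b := T)).exists_bound_of_continuousOn
    (picard_continuous hG hE hZ 1).continuousOn
  refine ⟨max C 0 * Real.exp (2 * max M 1 * T), M, hM, fun n t ht => ?_⟩
  have hM1 : 0 < max M 1 := lt_max_of_lt_right one_pos
  refine (picard_step_bound hG hE hZ hM1 (le_max_right C 0)
    (fun t ht => (hM t ht).trans (le_max_left _ _))
    (fun t ht => (hC t ht).trans (le_max_left _ _)) n t ht).trans ?_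
  rw [mul_right_comm]
  have := ht.2
  gcongr

lemma volterra_exists {G E Z : ℝ → ℝ} (hG : Continuous G) (hE : Continuous E)
    (hZ : Continuous Z) : ∃ κ : ℝ → ℝ, ContinuousOn κ (Ici 0) ∧ ∀ t ≥ (0:ℝ),
      κ t = min ((∫ s in (0:ℝ)..t, G (t - s) * κ s) - Z t) (E t) := by
  have hc := picard_continuous hG hE hZ
  have hlim : ∀ t : ℝ, ∃ a, 0 ≤ t →
      Filter.Tendsto (fun n => picard G E Z n t) Filter.atTop (nhds a) := by
    intro t
    by_cases ht : 0 ≤ t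
    · obtain ⟨K, M, -, hK⟩ := picard_geometric hG hE hZ t
      obtain ⟨a, ha⟩ := cauchySeq_tendsto_of_complete
        (cauchySeq_of_le_geometric (1 / 2) K (by norm_num) fun n => hK n t ⟨ht, le_rfl⟩)
      exact ⟨a, fun _ => ha⟩
    · exact ⟨0, fun h => absurd h ht⟩
  choose κ hκ using hlim
  have hdist : ∀ T : ℝ, ∃ K M : ℝ, (∀ t ∈ Icc 0 T, |G t| ≤ M) ∧ ∀ n, ∀ t ∈ Icc 0 T,
      |picard G E Z n t - κ t| ≤ K * (1 / 2) ^ n := by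
    intro T
    obtain ⟨K, M, hM, hK⟩ := picard_geometric hG hE hZ T
    refine ⟨K / (1 - 1 / 2), M, hM, fun n t ht => ?_⟩
    have := dist_le_of_le_geometric_of_tendsto (1 / 2) K (by norm_num)
      (fun n => hK n t ht) (hκ t ht.1) n
    rw [Real.dist_eq] at this
    linarith [mul_div_right_comm K ((1 / 2 : ℝ) ^ n) (1 - 1 / 2)]
  have hpow : ∀ K : ℝ, Filter.Tendsto (fun n : ℕ => K * (1 / 2 : ℝ) ^ n) Filter.atTop (nhds 0) :=
    fun K => by
      simpa using (tendsto_pow_atTop_nhds_zero_of_lt_one (r := (1 / 2 : ℝ)) (by norm_num)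
        (by norm_num)).const_mul K
  have hcontT : ∀ T : ℝ, ContinuousOn κ (Icc 0 T) := by
    intro T
    obtain ⟨K, -, -, hK⟩ := hdist T
    have hunif : TendstoUniformlyOn (picard G E Z) κ Filter.atTop (Icc 0 T) := by
      rw [Metric.tendstoUniformlyOn_iff]
      intro ε hε
      filter_upwards [(hpow K).eventually_lt_const hε] with n hn t ht
      rw [dist_comm, Real.dist_eq]
      exact (hK n t ht).trans_lt hn
    exact hunif.continuousOn (Filter.Frequently.of_forall fun n => (hc n).continuousOn)
  refine ⟨κ, fun t ht => ?_, fun t ht => ?_⟩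
  · refine (hcontT (t + 1) t ⟨ht, by linarith⟩).mono_of_mem_nhdsWithin ?_
    filter_upwards [self_mem_nhdsWithin, mem_nhdsWithin_of_mem_nhds (Iio_mem_nhds (lt_add_one t))]
      with s hs hs' using ⟨hs, le_of_lt hs'⟩
  · obtain ⟨K, M, hM, hK⟩ := hdist t
    have hGc : Continuous fun s => G (t - s) := hG.comp (continuous_const.sub continuous_id)
    have hintκ : IntervalIntegrable (fun s => G (t - s) * κ s) volume 0 t := by
      apply ContinuousOn.intervalIntegrable
      rw [uIcc_of_le ht]
      exact hGc.continuousOn.mul (hcontT t)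
    have hI : Filter.Tendsto (fun n => ∫ s in (0:ℝ)..t, G (t - s) * picard G E Z n s)
        Filter.atTop (nhds (∫ s in (0:ℝ)..t, G (t - s) * κ s)) := by
      rw [tendsto_iff_dist_tendsto_zero]
      refine squeeze_zero (fun _ => dist_nonneg) (fun n => ?_) (hpow (M * t * K))
      have hintn : IntervalIntegrable (fun s => G (t - s) * picard G E Z n s) volume 0 t :=
        (hGc.mul (hc n)).intervalIntegrable _ _
      rw [dist_eq_norm, ← intervalIntegral.integral_sub hintn hintκ]
      have hb := intervalIntegral.norm_integral_le_of_norm_le_const (a := 0) (b := t)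
        (f := fun s => G (t - s) * picard G E Z n s - G (t - s) * κ s)
        (C := M * (K * (1 / 2) ^ n)) (fun s hs => ?_)
      · rw [sub_zero, abs_of_nonneg ht] at hb
        exact hb.trans (le_of_eq (by ring))
      · rw [uIoc_of_le ht] at hs
        have h1 := hM (t - s) ⟨by linarith [hs.2], by linarith [hs.1]⟩
        rw [← mul_sub, Real.norm_eq_abs, abs_mul]
        exact mul_le_mul h1 (hK n s ⟨hs.1.le, hs.2⟩) (abs_nonneg _) ((abs_nonneg _).trans h1)
    exact tendsto_nhds_unique ((hκ t ht).comp (Filter.tendsto_add_atTop_nat 1))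
      ((hI.sub_const (Z t)).min tendsto_const_nhds)

/-- Existence of continuous solutions to the centered many-server equations for
continuous input data. -/
theorem cms_exists
    (g : ℝ → ℝ) (hg_cont : ContinuousOn g (Ici 0))
    (hg_nonneg : ∀ x ≥ (0:ℝ), 0 ≤ g x)
    (hg_integrable : IntegrableOn g (Ioi 0))
    (hg_int : (∫ x in Ioi (0:ℝ), g x) ≤ 1)
    (x₀ : ℝ) (η ζ : ℝ → ℝ)
    (hη : ContinuousOn η (Ici 0)) (hζ : ContinuousOn ζ (Ici 0))
    (hη0 : η 0 = 0) (hζ0 : ζ 0 = min x₀ 0) :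
    ∃ κ x : ℝ → ℝ, ContinuousOn κ (Ici 0) ∧ ContinuousOn x (Ici 0) ∧ κ 0 = 0 ∧
      SolvesCMS g η x₀ ζ κ x := by
  -- The data are extended to continuous functions on `ℝ` by `f (max t 0)`.
  have hext : ∀ {f : ℝ → ℝ}, ContinuousOn f (Ici 0) → Continuous fun t => f (max t 0) :=
    fun hf => hf.comp_continuous (by fun_prop) fun t => le_max_right t 0
  obtain ⟨κ, hκc, hκ⟩ := volterra_exists (hext hg_cont)
    ((hext hη).add (continuous_const (y := max x₀ 0))) (hext hζ)
  have hκ' : ∀ t ≥ (0:ℝ), κ t =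
      min ((∫ s in (0:ℝ)..t, g (t - s) * κ s) - ζ t) (η t + max x₀ 0) := by
    intro t ht
    have hI : ∫ s in (0:ℝ)..t, g (max (t - s) 0) * κ s = ∫ s in (0:ℝ)..t, g (t - s) * κ s := by
      apply intervalIntegral.integral_congr
      intro s hs
      rw [uIcc_of_le ht] at hs
      simp only [max_eq_left (sub_nonneg.2 hs.2)]
    have h := hκ t ht
    simp only [Pi.add_apply, max_eq_left ht] at h
    rwa [hI] at h
  have hIc : ContinuousOn (fun t => ∫ s in (0:ℝ)..t, g (t - s) * κ s) (Ici 0) := by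
    have h : Continuous fun t : ℝ => ∫ s in (0:ℝ)..t, g (max (t - s) 0) * κ (max s 0) := by
      apply intervalIntegral.continuous_parametric_intervalIntegral_of_continuous
        (f := fun t s => g (max (t - s) 0) * κ (max s 0)) _ continuous_id
      exact ((hext hg_cont).comp (continuous_fst.sub continuous_snd)).mul
        ((hext hκc).comp continuous_snd)
    refine h.continuousOn.congr fun t ht => ?_
    apply intervalIntegral.integral_congr
    intro s hs
    rw [uIcc_of_le ht] at hs
    simp only [max_eq_left (sub_nonneg.2 hs.2), max_eq_left hs.1]
  refine ⟨κ, fun t => ζ t + η t + max x₀ 0 - ∫ s in (0:ℝ)..t, g (t - s) * κ s, hκc,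
    ((hζ.add hη).add continuousOn_const).sub hIc, ?_, fun t ht => ?_⟩
  · rw [hκ' 0 le_rfl, intervalIntegral.integral_same, hζ0, hη0]
    rcases le_total x₀ 0 with h | h <;> simp [h]
  · have h := hκ' t ht
    dsimp only
    generalize (∫ s in (0:ℝ)..t, g (t - s) * κ s) = I at h ⊢
    generalize max x₀ 0 = m at h ⊢
    rcases le_total (I - ζ t) (η t + m) with h1 | h1
    · rw [min_eq_left h1] at h
      rw [min_eq_right (by linarith), max_eq_left (by linarith)]
      constructor <;> linarith
    · rw [min_eq_right h1] at h
      rw [min_eq_left (by linarith), max_eq_right (by linarith)]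
      constructor <;> linarith
end

section
/- Continuity of the centered many-server solution map with respect to uniform convergence on compact sets: suppose for each n the data (ηₙ, x₀ⁿ, ζₙ) consists of continuous functions ηₙ, ζₙ : [0,∞) → ℝ with ηₙ(0) = 0 and ζₙ(0) = min(x₀ⁿ,0), and similarly for limit data (η, x₀, ζ); suppose x₀ⁿ → x₀ in ℝ and ηₙ → η, ζₙ → ζ uniformly on every compact interval [0,T]. If (κₙ, xₙ) is a continuous solution of the CMS equations associated with (ηₙ, x₀ⁿ, ζₙ) for each n, and (κ, x) is a continuous solution of the CMS equations associated with (η, x₀, ζ), then κₙ → κ and xₙ → x uniformly on every compact interval [0,T]. -/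
/-!
Adding the two CMS equations gives `x = η + max x₀ 0 + ζ - g ∗ κ`, and the second equation
expresses `κ` through `max x 0`, a 1-Lipschitz function of `x`. Hence, if two sets of data differ by
at most `δ` on `[0, T]` and `g ≤ M` there (such an `M` exists as `g` is continuous), the difference
of the solutions satisfies `|Δκ t| ≤ 5 δ + M ∫₀ᵗ |Δκ|` and `|Δx t| ≤ 3 δ + M ∫₀ᵗ |Δκ|`. Grönwall's
inequality (`gronwall_integral_form`) bounds both by `5 δ exp (M T)` (`cms_stability`), which tends
to `0` with `δ`.
-/

open MeasureTheory Set Filter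

/-- Grönwall's inequality in integral form. The bound is on the right-hand side `ε + M ∫₀ᵗ u`,
which dominates `u t`. -/
theorem gronwall_integral_form {u : ℝ → ℝ} (hu : Continuous u) (hu0 : ∀ s, 0 ≤ u s)
    {M ε T : ℝ} (hM : 0 < M)
    (h : ∀ t ∈ Icc 0 T, u t ≤ ε + M * ∫ s in (0:ℝ)..t, u s) :
    ∀ t ∈ Icc 0 T, ε + M * ∫ s in (0:ℝ)..t, u s ≤ ε * Real.exp (M * t) := by
  intro t ht
  have hderiv : ∀ r, HasDerivAt (fun r => ∫ s in (0:ℝ)..r, u s) (u r) r := fun r =>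
    intervalIntegral.integral_hasDerivAt_right (hu.intervalIntegrable _ _)
      (hu.stronglyMeasurableAtFilter _ _) hu.continuousAt
  have key := norm_le_gronwallBound_of_norm_deriv_right_le
    (f := fun r => ∫ s in (0:ℝ)..r, u s) (f' := u) (δ := 0) (K := M) (ε := ε) (a := 0) (b := T)
    (fun r _ => (hderiv r).continuousAt.continuousWithinAt)
    (fun r _ => (hderiv r).hasDerivWithinAt) (by simp)
    (fun r hr => by
      have h1 := h r ⟨hr.1, hr.2.le⟩
      have h2 : M * ∫ s in (0:ℝ)..r, u s ≤ M * ‖∫ s in (0:ℝ)..r, u s‖ :=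
        mul_le_mul_of_nonneg_left (Real.le_norm_self _) hM.le
      rw [Real.norm_of_nonneg (hu0 r)]
      linarith) t ht
  rw [gronwallBound_of_K_ne_0 hM.ne'] at key
  simp only [sub_zero, zero_mul, zero_add] at key
  have h1 : (∫ s in (0:ℝ)..t, u s) ≤ ε / M * (Real.exp (M * t) - 1) :=
    (Real.le_norm_self _).trans key
  calc ε + M * ∫ s in (0:ℝ)..t, u s
      ≤ ε + M * (ε / M * (Real.exp (M * t) - 1)) := by gcongr
    _ = ε * Real.exp (M * t) := by field_simp; ring

/-- Adding the two CMS equations eliminates the reflection: `x` is the data minus the convolution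
of `g` with `κ`. -/
theorem SolvesCMS.x_eq {g η ζ κ x : ℝ → ℝ} {x₀ : ℝ} (h : SolvesCMS g η x₀ ζ κ x)
    {t : ℝ} (ht : 0 ≤ t) :
    x t = η t + max x₀ 0 + ζ t - ∫ s in (0:ℝ)..t, g (t - s) * κ s := by
  obtain ⟨h1, h2⟩ := h t ht
  have h3 := min_add_max (x t) 0
  linarith

/-- Quantitative form of the theorem: on `[0, T]` the solution map is Lipschitz in the data for the
sup norm, with constant `5 * exp (M * T)` where `M` bounds `|g|` on `[0, T]`. -/
theorem cms_stability {g : ℝ → ℝ} (hg_cont : ContinuousOn g (Ici 0))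
    {η₁ ζ₁ κ₁ x₁ η₂ ζ₂ κ₂ x₂ : ℝ → ℝ} {a₁ a₂ : ℝ}
    (hκ₁ : ContinuousOn κ₁ (Ici 0)) (hκ₂ : ContinuousOn κ₂ (Ici 0))
    (h₁ : SolvesCMS g η₁ a₁ ζ₁ κ₁ x₁) (h₂ : SolvesCMS g η₂ a₂ ζ₂ κ₂ x₂)
    {T M δ : ℝ} (hM : 0 < M) (hgM : ∀ s ∈ Icc 0 T, |g s| ≤ M)
    (hη : ∀ t ∈ Icc 0 T, |η₁ t - η₂ t| ≤ δ) (hζ : ∀ t ∈ Icc 0 T, |ζ₁ t - ζ₂ t| ≤ δ)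
    (ha : |a₁ - a₂| ≤ δ) :
    ∀ t ∈ Icc 0 T, |κ₁ t - κ₂ t| ≤ 5 * δ * Real.exp (M * T) ∧
      |x₁ t - x₂ t| ≤ 5 * δ * Real.exp (M * T) := by
  have hδ : 0 ≤ δ := (abs_nonneg _).trans ha
  -- Freezing the argument at `0` for negative times makes the difference continuous on all of `ℝ`.
  let u : ℝ → ℝ := fun s => |κ₁ (max s 0) - κ₂ (max s 0)|
  have hu_eq : ∀ s, 0 ≤ s → u s = |κ₁ s - κ₂ s| := fun s hs => by simp [u, max_eq_left hs]
  have hmax : Continuous fun s : ℝ => max s 0 := by fun_prop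
  have hu : Continuous u :=
    ((hκ₁.comp_continuous hmax fun s => le_max_right s 0).sub
      (hκ₂.comp_continuous hmax fun s => le_max_right s 0)).abs
  have hu0 : ∀ s, 0 ≤ u s := fun s => abs_nonneg _
  have hint : ∀ {κ : ℝ → ℝ}, ContinuousOn κ (Ici 0) → ∀ t, 0 ≤ t →
      IntervalIntegrable (fun s => g (t - s) * κ s) volume 0 t := by
    intro κ hκ t ht
    apply ContinuousOn.intervalIntegrable
    rw [uIcc_of_le ht]
    refine ContinuousOn.mul (hg_cont.comp (by fun_prop) fun s hs => ?_)
      (hκ.mono fun s hs => hs.1)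
    exact sub_nonneg.2 hs.2
  have hconv : ∀ t ∈ Icc 0 T,
      |(∫ s in (0:ℝ)..t, g (t - s) * κ₁ s) - ∫ s in (0:ℝ)..t, g (t - s) * κ₂ s|
        ≤ M * ∫ s in (0:ℝ)..t, u s := by
    intro t ht
    rw [← intervalIntegral.integral_sub (hint hκ₁ t ht.1) (hint hκ₂ t ht.1),
      ← intervalIntegral.integral_const_mul, ← Real.norm_eq_abs]
    refine intervalIntegral.norm_integral_le_of_norm_le ht.1 (Eventually.of_forall fun s hs => ?_)
      ((hu.const_mul M).intervalIntegrable _ _)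
    rw [hu_eq s hs.1.le, ← mul_sub, Real.norm_eq_abs, abs_mul]
    exact mul_le_mul_of_nonneg_right
      (hgM _ ⟨sub_nonneg.2 hs.2, by linarith [hs.1, ht.2]⟩) (abs_nonneg _)
  have hp : |max a₁ 0 - max a₂ 0| ≤ δ := (abs_max_sub_max_le_abs _ _ _).trans ha
  have hx : ∀ t ∈ Icc 0 T, |x₁ t - x₂ t| ≤ 3 * δ + M * ∫ s in (0:ℝ)..t, u s := by
    intro t ht
    rw [h₁.x_eq ht.1, h₂.x_eq ht.1]
    have e1 := abs_le.1 (hη t ht)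
    have e2 := abs_le.1 (hζ t ht)
    have e3 := abs_le.1 hp
    have e4 := abs_le.1 (hconv t ht)
    exact abs_le.2 ⟨by linarith, by linarith⟩
  have hκ : ∀ t ∈ Icc 0 T, |κ₁ t - κ₂ t| ≤ 5 * δ + M * ∫ s in (0:ℝ)..t, u s := by
    intro t ht
    rw [(h₁ t ht.1).2, (h₂ t ht.1).2]
    have e1 := abs_le.1 (hη t ht)
    have e2 := abs_le.1 ((abs_max_sub_max_le_abs (x₁ t) (x₂ t) 0).trans (hx t ht))
    have e3 := abs_le.1 hp
    exact abs_le.2 ⟨by linarith, by linarith⟩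
  intro t ht
  have hG := gronwall_integral_form hu hu0 hM
    (fun t ht => by rw [hu_eq t ht.1]; exact hκ t ht) t ht
  have hexp : 5 * δ * Real.exp (M * t) ≤ 5 * δ * Real.exp (M * T) := by
    have := ht.2
    gcongr
  exact ⟨(hκ t ht).trans (hG.trans hexp), by linarith [hx t ht]⟩

/-- Continuity of the centered many-server solution map with respect to uniform
convergence on compact sets. -/
theorem cms_continuous
    (g : ℝ → ℝ) (hg_cont : ContinuousOn g (Ici 0))
    (hg_nonneg : ∀ x ≥ (0:ℝ), 0 ≤ g x)
    (hg_integrable : IntegrableOn g (Ioi 0))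
    (hg_int : (∫ x in Ioi (0:ℝ), g x) ≤ 1)
    -- the prelimit data
    (ηs ζs : ℕ → ℝ → ℝ) (x₀s : ℕ → ℝ)
    (hηs : ∀ n, ContinuousOn (ηs n) (Ici 0)) (hζs : ∀ n, ContinuousOn (ζs n) (Ici 0))
    (hηs0 : ∀ n, ηs n 0 = 0) (hζs0 : ∀ n, ζs n 0 = min (x₀s n) 0)
    -- the limit data
    (η ζ : ℝ → ℝ) (x₀ : ℝ)
    (hη : ContinuousOn η (Ici 0)) (hζ : ContinuousOn ζ (Ici 0))
    (hη0 : η 0 = 0) (hζ0 : ζ 0 = min x₀ 0)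
    -- convergence of the data
    (hx₀conv : Tendsto x₀s atTop (nhds x₀))
    (hηconv : ∀ T > (0:ℝ), TendstoUniformlyOn ηs η atTop (Icc 0 T))
    (hζconv : ∀ T > (0:ℝ), TendstoUniformlyOn ζs ζ atTop (Icc 0 T))
    -- the prelimit solutions
    (κs xs : ℕ → ℝ → ℝ)
    (hκs : ∀ n, ContinuousOn (κs n) (Ici 0)) (hxs : ∀ n, ContinuousOn (xs n) (Ici 0))
    (hsol : ∀ n, SolvesCMS g (ηs n) (x₀s n) (ζs n) (κs n) (xs n))
    -- the limit solution
    (κ x : ℝ → ℝ)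
    (hκ : ContinuousOn κ (Ici 0)) (hx : ContinuousOn x (Ici 0))
    (hsol' : SolvesCMS g η x₀ ζ κ x) :
    ∀ T > (0:ℝ), TendstoUniformlyOn κs κ atTop (Icc 0 T) ∧
      TendstoUniformlyOn xs x atTop (Icc 0 T) := by
  intro T hT
  obtain ⟨M₀, hM₀⟩ := isCompact_Icc.exists_bound_of_continuousOn
    (hg_cont.mono (Icc_subset_Ici_self : Icc 0 T ⊆ Ici 0))
  have hM : 0 < max M₀ 1 := lt_max_of_lt_right one_pos
  have hgM : ∀ s ∈ Icc 0 T, |g s| ≤ max M₀ 1 := fun s hs => (hM₀ s hs).trans (le_max_left _ _)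
  have key : ∀ ε > (0:ℝ), ∀ᶠ n in atTop, ∀ t ∈ Icc 0 T,
      |κs n t - κ t| < ε ∧ |xs n t - x t| < ε := by
    intro ε hε
    -- The data tolerance for which the stability bound equals `ε / 2`.
    obtain ⟨δ, hδ, hδε⟩ : ∃ δ > 0, 5 * δ * Real.exp (max M₀ 1 * T) < ε := by
      refine ⟨ε / (10 * Real.exp (max M₀ 1 * T)), by positivity, ?_⟩
      have := Real.exp_pos (max M₀ 1 * T)
      field_simp
      norm_num
    filter_upwards [Metric.tendstoUniformlyOn_iff.1 (hηconv T hT) δ hδ,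
      Metric.tendstoUniformlyOn_iff.1 (hζconv T hT) δ hδ,
      Metric.tendsto_nhds.1 hx₀conv δ hδ] with n h1 h2 h3 t ht
    have hs := cms_stability hg_cont (hκs n) hκ (hsol n) hsol' hM hgM
      (fun t ht => by rw [← Real.dist_eq, dist_comm]; exact (h1 t ht).le)
      (fun t ht => by rw [← Real.dist_eq, dist_comm]; exact (h2 t ht).le)
      (by rw [← Real.dist_eq]; exact h3.le) t ht
    exact ⟨hs.1.trans_lt hδε, hs.2.trans_lt hδε⟩
  refine ⟨Metric.tendstoUniformlyOn_iff.2 fun ε hε => ?_,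
    Metric.tendstoUniformlyOn_iff.2 fun ε hε => ?_⟩
  · filter_upwards [key ε hε] with n hn t ht
    rw [dist_comm, Real.dist_eq]
    exact (hn t ht).1
  · filter_upwards [key ε hε] with n hn t ht
    rw [dist_comm, Real.dist_eq]
    exact (hn t ht).2
end

section
/- Continuity of the map from Dirac configurations into L²: assume in addition ∫₀^∞ Ḡ(x) dx < ∞. Fix m ∈ ℕ, points a₁, …, a_m ∈ [0,∞), and sequences a_j^k ∈ [0,∞) with a_j^k → a_j as k → ∞ for each j = 1, …, m. Define z(r) := Σ_{j=1}^m Ḡ(a_j + r)/Ḡ(a_j) and z_k(r) := Σ_{j=1}^m Ḡ(a_j^k + r)/Ḡ(a_j^k), with derivatives z′(r) = −Σ_j g(a_j + r)/Ḡ(a_j) and z_k′(r) = −Σ_j g(a_j^k + r)/Ḡ(a_j^k). Then ∫₀^∞ |z_k(r) − z(r)|² dr → 0 and ∫₀^∞ |z_k′(r) − z′(r)|² dr → 0 as k → ∞. -/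
/-!
Write `S = 1 - G`, which is antitone with values in `[0, 1]` and integrable on `(0, ∞)`. Both claims
are instances of a single dominated convergence statement (`tendsto_integral_sq_sum_shift`) for a
continuous function `f` on `[0, ∞)` with `|f| ≤ C * S`: the first with `f = S` and `C = 1`, the second
with `f = g` and `C = H`, the hazard rate bound.

Each summand `f (b + r) / S b`, with `b` close enough to `a_j` that `S b > S a_j / 2`, is at most
`2 * C * S r / S a_j`, because `S (b + r) ≤ S r`. The squared difference is therefore eventually
dominated by a constant times `S r ^ 2 ≤ S r`, and it tends to zero pointwise by continuity.
-/

open MeasureTheory Set Filter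

/-- The `L²` convergence of normalized shifts of a function `f` that is dominated by a multiple of the
survival function `S`. -/
lemma tendsto_integral_sq_sum_shift
    (S f : ℝ → ℝ) (C : ℝ) (hanti : Antitone S) (hS1 : ∀ x, S x ≤ 1)
    (hScont : ContinuousOn S (Ici 0)) (hfcont : ContinuousOn f (Ici 0))
    (hSpos : ∀ x ≥ (0:ℝ), 0 < S x) (hC : 0 ≤ C)
    (hf : ∀ x ≥ (0:ℝ), |f x| ≤ C * S x)
    (hSint : IntegrableOn S (Ioi 0))
    (m : ℕ) (a : Fin m → ℝ) (ha : ∀ j, 0 ≤ a j)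
    (ak : ℕ → Fin m → ℝ) (hak : ∀ k j, 0 ≤ ak k j)
    (haconv : ∀ j, Tendsto (fun k => ak k j) atTop (nhds (a j))) :
    Tendsto (fun k => ∫ r in Ioi (0:ℝ),
        ((∑ j, f (ak k j + r) / S (ak k j)) - ∑ j, f (a j + r) / S (a j)) ^ 2)
      atTop (nhds 0) := by
  have hlim : ∀ {F : ℝ → ℝ}, ContinuousOn F (Ici 0) → ∀ j, ∀ r ≥ (0:ℝ),
      Tendsto (fun k => F (ak k j + r)) atTop (nhds (F (a j + r))) := by
    intro F hF j r hr
    refine (hF (a j + r) (add_nonneg (ha j) hr)).tendsto.comp ?_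
    refine tendsto_nhdsWithin_iff.2 ⟨(haconv j).add_const r, ?_⟩
    exact Eventually.of_forall fun k => add_nonneg (hak k j) hr
  have hSlim : ∀ j, Tendsto (fun k => S (ak k j)) atTop (nhds (S (a j))) := by
    intro j
    simpa using hlim hScont j 0 le_rfl
  have hmeas : ∀ b : Fin m → ℝ, (∀ j, 0 ≤ b j) →
      ContinuousOn (fun r => ∑ j, f (b j + r) / S (b j)) (Ioi 0) := by
    intro b hb
    refine continuousOn_finsetSum _ fun j _ => ContinuousOn.div_const ?_ _
    refine hfcont.comp (by fun_prop) fun r hr => ?_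
    exact add_nonneg (hb j) (le_of_lt hr)
  have hterm : ∀ j, ∀ b ≥ (0:ℝ), S (a j) / 2 < S b → ∀ r > (0:ℝ),
      |f (b + r) / S b| ≤ 2 * C / S (a j) * S r := by
    intro j b hb hSb r hr
    have hSa := hSpos (a j) (ha j)
    have h1 : |f (b + r)| ≤ C * S r :=
      (hf _ (by positivity)).trans (mul_le_mul_of_nonneg_left (hanti (by linarith)) hC)
    have hSr := hSpos r hr.le
    rw [abs_div, abs_of_pos (hSpos b hb)]
    calc |f (b + r)| / S b ≤ (C * S r) / (S (a j) / 2) := by gcongr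
      _ = 2 * C / S (a j) * S r := by field_simp
  set D : ℝ := ∑ j, 2 * C / S (a j) with hD
  have hsum : ∀ b : Fin m → ℝ, (∀ j, 0 ≤ b j) → (∀ j, S (a j) / 2 < S (b j)) → ∀ r > (0:ℝ),
      |∑ j, f (b j + r) / S (b j)| ≤ D * S r := by
    intro b hb hSb r hr
    rw [hD, Finset.sum_mul]
    exact (Finset.abs_sum_le_sum_abs _ _).trans
      (Finset.sum_le_sum fun j _ => hterm j (b j) (hb j) (hSb j) r hr)
  have hDCT := tendsto_integral_filter_of_dominated_convergence
    (μ := volume.restrict (Ioi (0:ℝ))) (l := atTop)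
    (F := fun k r => ((∑ j, f (ak k j + r) / S (ak k j)) - ∑ j, f (a j + r) / S (a j)) ^ 2)
    (f := fun _ => 0) (fun r => (2 * D) ^ 2 * S r) ?_ ?_ (hSint.const_mul _) ?_
  · simpa using hDCT
  · exact Eventually.of_forall fun k =>
      (((hmeas _ (hak k)).sub (hmeas _ ha)).pow 2).aestronglyMeasurable measurableSet_Ioi
  · have hev : ∀ᶠ k in atTop, ∀ j, S (a j) / 2 < S (ak k j) :=
      eventually_all.2 fun j => (hSlim j).eventually_const_lt (half_lt_self (hSpos _ (ha j)))
    filter_upwards [hev] with k hk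
    refine (ae_restrict_iff' measurableSet_Ioi).2 (Eventually.of_forall fun r hr => ?_)
    have h1 := hsum (ak k) (hak k) hk r hr
    have h2 := hsum a ha (fun j => half_lt_self (hSpos _ (ha j))) r hr
    have hSr := hSpos r (le_of_lt hr)
    have h3 : |(∑ j, f (ak k j + r) / S (ak k j)) - ∑ j, f (a j + r) / S (a j)|
        ≤ 2 * D * S r := (abs_sub _ _).trans (by linarith)
    rw [Real.norm_eq_abs, abs_pow]
    calc _ ≤ (2 * D * S r) ^ 2 := pow_le_pow_left₀ (abs_nonneg _) h3 2
      _ = (2 * D) ^ 2 * (S r * S r) := by ring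
      _ ≤ (2 * D) ^ 2 * S r := by
        gcongr
        exact mul_le_of_le_one_left hSr.le (hS1 r)
  · refine (ae_restrict_iff' measurableSet_Ioi).2 (Eventually.of_forall fun r hr => ?_)
    have h : Tendsto (fun k => ∑ j, f (ak k j + r) / S (ak k j)) atTop
        (nhds (∑ j, f (a j + r) / S (a j))) :=
      tendsto_finsetSum _ fun j _ =>
        (hlim hfcont j r (le_of_lt hr)).div (hSlim j) (hSpos _ (ha j)).ne'
    simpa using (h.sub_const (∑ j, f (a j + r) / S (a j))).pow 2

/-- Continuity of the map from Dirac configurations into `L²`: if `a_j^k → a_j` in `[0,∞)`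
for `j = 1,…,m`, then `z_k → z` and `z_k' → z'` in `L²(0,∞)`, where
`z_k(r) = Σ_j Ḡ(a_j^k + r)/Ḡ(a_j^k)` and `z_k'(r) = -Σ_j g(a_j^k + r)/Ḡ(a_j^k)`. -/
theorem dirac_config_map_continuous
    (G g : ℝ → ℝ) (H : ℝ)
    (hG0 : ∀ x ≤ (0:ℝ), G x = 0)
    (hGmono : Monotone G)
    (hGlim : Tendsto G atTop (nhds 1))
    (hGderiv : ∀ x ∈ Ici (0:ℝ), HasDerivWithinAt G (g x) (Ici 0) x)
    (hg_cont : ContinuousOn g (Ici 0))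
    (hGpos : ∀ x ≥ (0:ℝ), 0 < 1 - G x)
    (hH : ∀ x ≥ (0:ℝ), g x / (1 - G x) ≤ H)
    (hGint : IntegrableOn (fun x => 1 - G x) (Ioi 0))
    (m : ℕ) (a : Fin m → ℝ) (ha : ∀ j, 0 ≤ a j)
    (ak : ℕ → Fin m → ℝ) (hak : ∀ k j, 0 ≤ ak k j)
    (haconv : ∀ j, Tendsto (fun k => ak k j) atTop (nhds (a j))) :
    Tendsto (fun k => ∫ r in Ioi (0:ℝ),
        ((∑ j, (1 - G (ak k j + r)) / (1 - G (ak k j))) -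
          ∑ j, (1 - G (a j + r)) / (1 - G (a j))) ^ 2) atTop (nhds 0) ∧
    Tendsto (fun k => ∫ r in Ioi (0:ℝ),
        ((-∑ j, g (ak k j + r) / (1 - G (ak k j))) -
          (-∑ j, g (a j + r) / (1 - G (a j)))) ^ 2) atTop (nhds 0) := by
  have hanti : Antitone fun x => 1 - G x := fun x y hxy => sub_le_sub_left (hGmono hxy) 1
  have hG_nonneg : ∀ x, 0 ≤ G x := fun x =>
    (hG0 _ (min_le_right x 0)).symm.le.trans (hGmono (min_le_left x 0))
  have hS1 : ∀ x, 1 - G x ≤ 1 := fun x => sub_le_self 1 (hG_nonneg x)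
  have hScont : ContinuousOn (fun x => 1 - G x) (Ici 0) :=
    continuousOn_const.sub fun x hx => (hGderiv x hx).continuousWithinAt
  have hg_nonneg : ∀ x ≥ (0:ℝ), 0 ≤ g x := by
    intro x hx
    rw [← (hGderiv x hx).derivWithin (uniqueDiffOn_Ici 0 x hx)]
    exact (hGmono.monotoneOn _).derivWithin_nonneg
  have hH0 : 0 ≤ H :=
    (div_nonneg (hg_nonneg 0 le_rfl) (hGpos 0 le_rfl).le).trans (hH 0 le_rfl)
  refine ⟨tendsto_integral_sq_sum_shift (fun x => 1 - G x) (fun x => 1 - G x) 1 hanti hS1 hScont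
    hScont hGpos zero_le_one (fun x hx => ?_) hGint m a ha ak hak haconv, ?_⟩
  · rw [abs_of_pos (hGpos x hx), one_mul]
  · have key := tendsto_integral_sq_sum_shift (fun x => 1 - G x) g H hanti hS1 hScont
      hg_cont hGpos hH0 (fun x hx => ?_) hGint m a ha ak hak haconv
    · refine key.congr fun k => integral_congr_ae (Eventually.of_forall fun r => ?_)
      ring
    · rw [abs_of_nonneg (hg_nonneg x hx)]
      exact (div_le_iff₀ (hGpos x hx)).1 (hH x hx)
end

section
/- A uniform expectation bound from a polynomial maximal inequality: let (Ω, P) be a probability space, let (S_j)_{j≥0} be real-valued random variables with S₀ = 0, let m ∈ [−1, 0), p > 2 and C₁ ≥ 0, and suppose that for every k ≥ 1 and every x > 0, P( max_{1≤j≤k} (S_j − j·m) > x ) ≤ C₁ k^{p/2} x^{−p}. Set L := sup_{j≥0} S_j (so L ≥ 0) and C₄ := 2^{p/2} C₁ / ((p−1)(1 − 2^{−(p−2)/2})). Then E[ |m| · L ] ≤ 1 + C₄ (2^{p/2} + 1). -/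
open MeasureTheory Set Filter

/-!
Write `μ = |m| = -m ∈ (0, 1]` and `T_j = S_j - j m = S_j + j μ`. Take an integer `K` with
`μ⁻² ≤ K ≤ 2 μ⁻²` and let `Y_k` be the maximum of `T_j` over `1 ≤ j ≤ k`. An index `j ≤ K` satisfies
`S_j ≤ T_j ≤ Y_K`, while an index `K 2^i ≤ j ≤ K 2^(i+1)` satisfies
`S_j = T_j - j μ ≤ Y_{K 2^(i+1)} - K 2^i μ`. Hence, pointwise,
`L ≤ 1/μ + (Y_K - 1/μ)⁺ + ∑ i, (Y_{K 2^(i+1)} - K 2^i μ)⁺`.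

The layer-cake formula turns the tail bound on `Y_k` into
`E (Y_k - a)⁺ ≤ C₁ k^(p/2) a^(1-p) / (p-1)` (`exists_running_max`). After multiplication by `μ`, the
choice of `K` bounds the first term by `b = 2^(p/2) C₁ / (p-1)` (`first_block_bound`) and the `i`-th
dyadic term by `b r^i` with `r = 2^(-(p-2)/2) < 1` (`dyadic_block_bound`). Summing the geometric
series gives `E[μ L] ≤ 1 + b + b / (1 - r)`, and `C₄ = b / (1 - r)` is at least `b`.
-/

/-- Truncated first moment from a polynomial tail, by integrating `P (Y > t + a)` over `t > 0`. -/
lemma lintegral_sub_le_of_tail {Ω : Type*} [MeasurableSpace Ω] (P : Measure Ω)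
    (Y : Ω → ℝ) (hY : Measurable Y) (p A a : ℝ) (hp : 1 < p) (hA : 0 ≤ A) (ha : 0 < a)
    (htail : ∀ x : ℝ, 0 < x → P {ω | x < Y ω} ≤ ENNReal.ofReal (A * x ^ (-p))) :
    ∫⁻ ω, ENNReal.ofReal (Y ω - a) ∂P ≤ ENNReal.ofReal (A * a ^ (1 - p) / (p - 1)) := by
  have hpos : ∀ ω, ENNReal.ofReal (Y ω - a) = ENNReal.ofReal (max (Y ω - a) 0) := by
    intro ω
    rcases le_total (Y ω - a) 0 with h | h
    · simp [h, ENNReal.ofReal_of_nonpos h]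
    · simp [h]
  simp_rw [hpos]
  rw [lintegral_eq_lintegral_meas_lt (f := fun ω => max (Y ω - a) 0) P
    (ae_of_all _ fun ω => le_max_right _ _)
    ((hY.sub_const a).max measurable_const).aemeasurable]
  have hint : IntegrableOn (fun x : ℝ => A * x ^ (-p)) (Ioi a) :=
    (integrableOn_Ioi_rpow_of_lt (by linarith) ha).const_mul A
  calc ∫⁻ t in Ioi (0 : ℝ), P {ω | t < max (Y ω - a) 0}
      ≤ ∫⁻ t in Ioi (0 : ℝ), ENNReal.ofReal (A * (t + a) ^ (-p)) := by
        refine setLIntegral_mono' measurableSet_Ioi fun t ht => ?_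
        have ht0 : 0 < t := ht
        refine le_trans (measure_mono ?_) (htail (t + a) (by linarith))
        intro ω hω
        have hω' : t < max (Y ω - a) 0 := hω
        rcases lt_max_iff.1 hω' with h | h
        · change t + a < Y ω
          linarith
        · linarith
    _ = ∫⁻ x in Ioi a, ENNReal.ofReal (A * x ^ (-p)) := by
        have h := (measurePreserving_add_right (volume : Measure ℝ) a).setLIntegral_comp_preimage
          (s := Ioi a) measurableSet_Ioi
          (f := fun x : ℝ => ENNReal.ofReal (A * x ^ (-p))) (by fun_prop)
        simpa using h
    _ = ENNReal.ofReal (∫ x in Ioi a, A * x ^ (-p)) := by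
        refine (ofReal_integral_eq_lintegral_ofReal hint ?_).symm
        refine (ae_restrict_iff' measurableSet_Ioi).2 (ae_of_all _ fun x hx => ?_)
        have hx0 : 0 < x := ha.trans hx
        change 0 ≤ A * x ^ (-p)
        positivity
    _ = ENNReal.ofReal (A * a ^ (1 - p) / (p - 1)) := by
        rw [integral_const_mul, integral_Ioi_rpow_of_lt (by linarith) ha]
        congr 1
        rw [show -p + 1 = 1 - p by ring, show 1 - p = -(p - 1) by ring, neg_div_neg_eq, mul_div_assoc]

/-- The running maximum of `T 1, …, T k` as a measurable function, with its truncated first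
moment bounded through `lintegral_sub_le_of_tail`. -/
lemma exists_running_max {Ω : Type*} [MeasurableSpace Ω] (P : Measure Ω)
    (T : ℕ → Ω → ℝ) (hT : ∀ j, Measurable (T j)) (p C a : ℝ) (hp : 1 < p) (hC : 0 ≤ C)
    (ha : 0 < a) (k : ℕ) (hk : 1 ≤ k)
    (hmax : ∀ x : ℝ, 0 < x → P {ω | ∃ j : ℕ, 1 ≤ j ∧ j ≤ k ∧ x < T j ω} ≤
        ENNReal.ofReal (C * (k : ℝ) ^ (p / 2) * x ^ (-p))) :
    ∃ Y : Ω → ℝ, Measurable Y ∧ (∀ j, 1 ≤ j → j ≤ k → ∀ ω, T j ω ≤ Y ω) ∧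
      ∫⁻ ω, ENNReal.ofReal (Y ω - a) ∂P ≤
        ENNReal.ofReal (C * (k : ℝ) ^ (p / 2) * a ^ (1 - p) / (p - 1)) := by
  have hne : (Finset.Icc 1 k).Nonempty := Finset.nonempty_Icc.2 hk
  have hYm : Measurable ((Finset.Icc 1 k).sup' hne T) :=
    Finset.measurable_sup' hne fun j _ => hT j
  refine ⟨(Finset.Icc 1 k).sup' hne T, hYm, ?_, ?_⟩
  · intro j h1 h2 ω
    rw [Finset.sup'_apply]
    exact Finset.le_sup' (fun i => T i ω) (Finset.mem_Icc.2 ⟨h1, h2⟩)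
  · refine lintegral_sub_le_of_tail P _ hYm p _ a hp (by positivity) ha fun x hx => ?_
    refine le_trans (measure_mono ?_) (hmax x hx)
    intro ω hω
    have hω' : x < (Finset.Icc 1 k).sup' hne T ω := hω
    rw [Finset.sup'_apply, Finset.lt_sup'_iff] at hω'
    obtain ⟨j, hj, hlt⟩ := hω'
    exact ⟨j, (Finset.mem_Icc.1 hj).1, (Finset.mem_Icc.1 hj).2, hlt⟩

lemma first_block_bound (μ p C K : ℝ) (hμ : 0 < μ) (hp : 2 < p) (hC : 0 ≤ C) (hK0 : 0 < K)
    (hK : K ≤ 2 * μ ^ (-2 : ℝ)) :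
    μ * (C * K ^ (p / 2) * (1 / μ) ^ (1 - p) / (p - 1)) ≤ (2:ℝ) ^ (p / 2) * C / (p - 1) := by
  have h1 : K ^ (p / 2) ≤ (2:ℝ) ^ (p / 2) * μ ^ (-p) := by
    calc K ^ (p / 2) ≤ (2 * μ ^ (-2 : ℝ)) ^ (p / 2) :=
          Real.rpow_le_rpow hK0.le hK (by linarith)
      _ = (2:ℝ) ^ (p / 2) * μ ^ (-p) := by
          rw [Real.mul_rpow (by norm_num) (by positivity), ← Real.rpow_mul hμ.le]
          congr 2
          ring
  have h2 : (1 / μ) ^ (1 - p) = μ ^ (p - 1) := by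
    rw [one_div, Real.inv_rpow hμ.le, ← Real.rpow_neg hμ.le, neg_sub]
  have h3 : μ * μ ^ (p - 1) * μ ^ (-p) = 1 := by
    nth_rewrite 1 [← Real.rpow_one μ]
    rw [← Real.rpow_add hμ, ← Real.rpow_add hμ]
    simp
  have hp1 : 0 < p - 1 := by linarith
  rw [h2, ← mul_div_assoc]
  refine div_le_div_of_nonneg_right ?_ hp1.le
  calc μ * (C * K ^ (p / 2) * μ ^ (p - 1))
      ≤ μ * (C * ((2:ℝ) ^ (p / 2) * μ ^ (-p)) * μ ^ (p - 1)) := by gcongr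
    _ = (2:ℝ) ^ (p / 2) * C * (μ * μ ^ (p - 1) * μ ^ (-p)) := by ring
    _ = (2:ℝ) ^ (p / 2) * C := by rw [h3, mul_one]

lemma dyadic_block_bound (μ p C K : ℝ) (hμ : 0 < μ) (hp : 2 < p) (hC : 0 ≤ C)
    (hK : μ ^ (-2 : ℝ) ≤ K) (i : ℕ) :
    μ * (C * (K * 2 ^ (i + 1)) ^ (p / 2) * (K * 2 ^ i * μ) ^ (1 - p) / (p - 1)) ≤
      (2:ℝ) ^ (p / 2) * C / (p - 1) * ((2:ℝ) ^ (-(p - 2) / 2)) ^ i := by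
  have hμ2 : 0 < μ ^ (-2 : ℝ) := by positivity
  have hK0 : 0 < K := hμ2.trans_le hK
  have hp1 : 0 < p - 1 := by linarith
  set N : ℝ := K * 2 ^ i with hN
  have hN0 : 0 < N := by positivity
  have h1 : (K * 2 ^ (i + 1)) ^ (p / 2) = (2:ℝ) ^ (p / 2) * N ^ (p / 2) := by
    rw [← Real.mul_rpow (by norm_num) hN0.le, hN]
    congr 1
    ring
  have h2 : (N * μ) ^ (1 - p) = N ^ (1 - p) * μ ^ (1 - p) := Real.mul_rpow hN0.le hμ.le
  have h3 : N ^ (p / 2) * N ^ (1 - p) = N ^ (-(p - 2) / 2) := by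
    rw [← Real.rpow_add hN0]
    congr 1
    ring
  have h4 : N ^ (-(p - 2) / 2) ≤ μ ^ (p - 2) * ((2:ℝ) ^ (-(p - 2) / 2)) ^ i := by
    rw [hN, Real.mul_rpow hK0.le (by positivity), Real.rpow_pow_comm (by norm_num)]
    gcongr
    calc K ^ (-(p - 2) / 2) ≤ (μ ^ (-2 : ℝ)) ^ (-(p - 2) / 2) :=
          Real.rpow_le_rpow_of_nonpos hμ2 hK (by linarith)
      _ = μ ^ (p - 2) := by
          rw [← Real.rpow_mul hμ.le]
          congr 1
          ring
  have h5 : μ * μ ^ (1 - p) * μ ^ (p - 2) = 1 := by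
    nth_rewrite 1 [← Real.rpow_one μ]
    rw [← Real.rpow_add hμ, ← Real.rpow_add hμ,
      show 1 + (1 - p) + (p - 2) = 0 by ring, Real.rpow_zero]
  rw [h1, h2, ← mul_div_assoc, div_mul_eq_mul_div]
  refine div_le_div_of_nonneg_right ?_ hp1.le
  calc μ * (C * ((2:ℝ) ^ (p / 2) * N ^ (p / 2)) * (N ^ (1 - p) * μ ^ (1 - p)))
      = (2:ℝ) ^ (p / 2) * C * (μ * μ ^ (1 - p)) * (N ^ (p / 2) * N ^ (1 - p)) := by ring
    _ ≤ (2:ℝ) ^ (p / 2) * C * (μ * μ ^ (1 - p)) *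
          (μ ^ (p - 2) * ((2:ℝ) ^ (-(p - 2) / 2)) ^ i) := by
        rw [h3]
        gcongr
    _ = (2:ℝ) ^ (p / 2) * C * ((2:ℝ) ^ (-(p - 2) / 2)) ^ i *
          (μ * μ ^ (1 - p) * μ ^ (p - 2)) := by ring
    _ = (2:ℝ) ^ (p / 2) * C * ((2:ℝ) ^ (-(p - 2) / 2)) ^ i := by rw [h5, mul_one]

/-- A uniform expectation bound from a polynomial maximal inequality: if `S₀ = 0`,
`m ∈ [-1,0)`, `p > 2`, `C₁ ≥ 0` and
`P(max_{1≤j≤k}(S_j - j m) > x) ≤ C₁ k^{p/2} x^{-p}` for all `k ≥ 1` and `x > 0`, then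
with `L = sup_j S_j` and `C₄ = 2^{p/2} C₁/((p-1)(1-2^{-(p-2)/2}))` one has
`E[|m| L] ≤ 1 + C₄ (2^{p/2} + 1)`. -/
theorem uniform_expectation_bound
    {Ω : Type*} [MeasurableSpace Ω] (P : Measure Ω) [IsProbabilityMeasure P]
    (S : ℕ → Ω → ℝ) (hSmeas : ∀ j, Measurable (S j))
    (hS0 : ∀ ω, S 0 ω = 0)
    (m p C₁ : ℝ) (hm : m ∈ Ico (-1 : ℝ) 0) (hp : 2 < p) (hC₁ : 0 ≤ C₁)
    (hmax : ∀ k : ℕ, 1 ≤ k → ∀ x : ℝ, 0 < x →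
      P {ω | ∃ j : ℕ, 1 ≤ j ∧ j ≤ k ∧ x < S j ω - (j : ℝ) * m} ≤
        ENNReal.ofReal (C₁ * (k : ℝ) ^ (p / 2) * x ^ (-p))) :
    (∫⁻ ω, ENNReal.ofReal |m| * (⨆ j : ℕ, ENNReal.ofReal (S j ω)) ∂P) ≤
      ENNReal.ofReal (1 + (2:ℝ) ^ (p / 2) * C₁ / ((p - 1) * (1 - (2:ℝ) ^ (-(p - 2) / 2)))
        * ((2:ℝ) ^ (p / 2) + 1)) := by
  have hm0 : m < 0 := hm.2
  obtain ⟨μ, hμ⟩ : ∃ μ : ℝ, μ = -m := ⟨_, rfl⟩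
  have hμ0 : 0 < μ := by linarith
  have hμ1 : μ ≤ 1 := by linarith [hm.1]
  have habs : |m| = μ := by rw [abs_of_neg hm0, hμ]
  -- `K = ⌈μ⁻²⌉`; the factor `2` in the upper bound uses `μ ≤ 1`.
  obtain ⟨K, hKlo, hKhi⟩ : ∃ K : ℕ, μ ^ (-2 : ℝ) ≤ K ∧ (K : ℝ) ≤ 2 * μ ^ (-2 : ℝ) := by
    have h1 : 1 ≤ μ ^ (-2 : ℝ) := Real.one_le_rpow_of_pos_of_le_one_of_nonpos hμ0 hμ1 (by norm_num)
    refine ⟨⌈μ ^ (-2 : ℝ)⌉₊, Nat.le_ceil _, ?_⟩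
    linarith [Nat.ceil_lt_add_one (zero_le_one.trans h1)]
  have hK0 : (0 : ℝ) < K := (by positivity : 0 < μ ^ (-2 : ℝ)).trans_le hKlo
  have hK1 : 1 ≤ K := by exact_mod_cast hK0
  have hTmeas : ∀ j : ℕ, Measurable fun ω => S j ω - (j : ℝ) * m :=
    fun j => (hSmeas j).sub_const _
  obtain ⟨Y₀, hY₀m, hY₀, hY₀int⟩ := exists_running_max P (fun j ω => S j ω - (j : ℝ) * m) hTmeas
    p C₁ (1 / μ) (by linarith) hC₁ (by positivity) K hK1 (hmax K hK1)
  have hblock : ∀ i : ℕ, 1 ≤ K * 2 ^ (i + 1) := fun i => Nat.mul_pos hK1 (by positivity)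
  choose Y hYm hY hYint using fun i : ℕ =>
    exists_running_max P (fun j ω => S j ω - (j : ℝ) * m) hTmeas
      p C₁ (K * 2 ^ i * μ) (by linarith) hC₁ (by positivity) (K * 2 ^ (i + 1)) (hblock i)
      (hmax _ (hblock i))
  have hpt : ∀ ω, (⨆ j : ℕ, ENNReal.ofReal (S j ω)) ≤
      ENNReal.ofReal (1 / μ) + ENNReal.ofReal (Y₀ ω - 1 / μ) +
        ∑' i, ENNReal.ofReal (Y i ω - K * 2 ^ i * μ) := by
    intro ω
    refine iSup_le fun j => ?_
    rcases Nat.eq_zero_or_pos j with rfl | hj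
    · simp [hS0]
    have hjm : (j : ℝ) * m = -(j * μ) := by rw [hμ]; ring
    rcases le_total j K with hjK | hjK
    · refine le_trans ?_ le_self_add
      refine le_trans (ENNReal.ofReal_le_ofReal ?_) ENNReal.ofReal_add_le
      have h := hY₀ j hj hjK ω
      have : 0 ≤ (j : ℝ) * μ := by positivity
      simp only [hjm] at h
      linarith
    · have hx : (1 : ℝ) ≤ j / K := by
        rw [one_le_div hK0]
        exact_mod_cast hjK
      obtain ⟨i, hi1, hi2⟩ := exists_nat_pow_near hx (one_lt_two : (1 : ℝ) < 2)
      rw [le_div_iff₀ hK0] at hi1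
      rw [div_lt_iff₀ hK0] at hi2
      have hjle : j ≤ K * 2 ^ (i + 1) := by
        rw [mul_comm]
        exact_mod_cast hi2.le
      refine le_trans ?_ le_add_self
      refine le_trans (ENNReal.ofReal_le_ofReal ?_)
        (ENNReal.le_tsum (f := fun i => ENNReal.ofReal (Y i ω - K * 2 ^ i * μ)) i)
      have h := hY i j hj hjle ω
      have : (2 : ℝ) ^ i * K * μ ≤ j * μ := by gcongr
      simp only [hjm] at h
      linarith
  set b : ℝ := (2:ℝ) ^ (p / 2) * C₁ / (p - 1) with hb
  set r : ℝ := (2:ℝ) ^ (-(p - 2) / 2) with hr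
  have hp1 : 0 < p - 1 := by linarith
  have hb0 : 0 ≤ b := by positivity
  have hr0 : 0 < r := by positivity
  have hr1 : r < 1 := Real.rpow_lt_one_of_one_lt_of_neg (by norm_num) (by linarith)
  have hterm0 : ENNReal.ofReal μ * ∫⁻ ω, ENNReal.ofReal (Y₀ ω - 1 / μ) ∂P ≤ ENNReal.ofReal b := by
    refine (mul_le_mul_right hY₀int _).trans ?_
    rw [← ENNReal.ofReal_mul hμ0.le]
    exact ENNReal.ofReal_le_ofReal (first_block_bound μ p C₁ K hμ0 hp hC₁ hK0 hKhi)
  have hterm : ∀ i, ENNReal.ofReal μ * ∫⁻ ω, ENNReal.ofReal (Y i ω - K * 2 ^ i * μ) ∂P ≤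
      ENNReal.ofReal (b * r ^ i) := by
    intro i
    refine (mul_le_mul_right (hYint i) _).trans ?_
    rw [← ENNReal.ofReal_mul hμ0.le]
    refine ENNReal.ofReal_le_ofReal ?_
    push_cast
    exact dyadic_block_bound μ p C₁ K hμ0 hp hC₁ hKlo i
  have hmY₀ : Measurable fun ω => ENNReal.ofReal (Y₀ ω - 1 / μ) := by fun_prop
  have hmY : ∀ i, Measurable fun ω => ENNReal.ofReal (Y i ω - K * 2 ^ i * μ) := fun i =>
    ((hYm i).sub_const _).ennreal_ofReal
  have hgeo : ∑' i, ENNReal.ofReal (b * r ^ i) = ENNReal.ofReal (b * (1 - r)⁻¹) := by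
    rw [← ENNReal.ofReal_tsum_of_nonneg (fun i => by positivity)
      ((summable_geometric_of_lt_one hr0.le hr1).mul_left b), tsum_mul_left,
      tsum_geometric_of_lt_one hr0.le hr1]
  have hone : (1 : ℝ) ≤ (1 - r)⁻¹ := (one_le_inv₀ (by linarith)).2 (by linarith)
  calc ∫⁻ ω, ENNReal.ofReal |m| * (⨆ j : ℕ, ENNReal.ofReal (S j ω)) ∂P
      ≤ ∫⁻ ω, ENNReal.ofReal μ * (ENNReal.ofReal (1 / μ) + ENNReal.ofReal (Y₀ ω - 1 / μ) +
          ∑' i, ENNReal.ofReal (Y i ω - K * 2 ^ i * μ)) ∂P := by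
        rw [habs]
        exact lintegral_mono fun ω => mul_le_mul_right (hpt ω) _
    _ = ENNReal.ofReal μ * ENNReal.ofReal (1 / μ) +
          ENNReal.ofReal μ * ∫⁻ ω, ENNReal.ofReal (Y₀ ω - 1 / μ) ∂P +
          ∑' i, ENNReal.ofReal μ * ∫⁻ ω, ENNReal.ofReal (Y i ω - K * 2 ^ i * μ) ∂P := by
        rw [lintegral_const_mul' _ _ ENNReal.ofReal_ne_top,
          lintegral_add_left (hmY₀.const_add _), lintegral_add_left measurable_const,
          lintegral_tsum fun i => (hmY i).aemeasurable, ENNReal.tsum_mul_left]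
        simp [mul_add]
    _ ≤ ENNReal.ofReal 1 + ENNReal.ofReal b + ENNReal.ofReal (b * (1 - r)⁻¹) := by
        refine add_le_add (add_le_add (le_of_eq ?_) hterm0) ?_
        · rw [← ENNReal.ofReal_mul hμ0.le, mul_one_div_cancel hμ0.ne']
        · rw [← hgeo]
          exact ENNReal.tsum_le_tsum hterm
    _ = ENNReal.ofReal (1 + b + b * (1 - r)⁻¹) := by
        have h0 : 0 ≤ b * (1 - r)⁻¹ := mul_nonneg hb0 (zero_le_one.trans hone)
        rw [ENNReal.ofReal_add (by linarith) h0, ENNReal.ofReal_add zero_le_one hb0]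
    _ ≤ _ := by
        refine ENNReal.ofReal_le_ofReal ?_
        have hC4 : (2:ℝ) ^ (p / 2) * C₁ / ((p - 1) * (1 - r)) = b * (1 - r)⁻¹ := by
          rw [hb, ← div_div, div_eq_mul_inv _ (1 - r)]
        have h2 : (1 : ℝ) ≤ (2:ℝ) ^ (p / 2) := Real.one_le_rpow (by norm_num) (by linarith)
        have h3 : b ≤ b * (1 - r)⁻¹ := le_mul_of_one_le_right hb0 hone
        rw [hC4]
        nlinarith [mul_nonneg (hb0.trans h3) (sub_nonneg.2 h2)]
end

section
/- Boundedness of the hazard rate of the log-normal distribution: fix σ > 0 and define for x > 0 the log-normal density g(x) := (1/(xσ√(2π))) exp(−(log x)²/(2σ²)) and complementary c.d.f. Ḡ(x) := ∫_x^∞ g(u) du. Then g is continuously differentiable on (0,∞), lim_{x→0⁺} g(x) = 0 and lim_{x→0⁺} g′(x) = 0, and both ratios g(x)/Ḡ(x) and |g′(x)|/Ḡ(x) are bounded on (0,∞). Moreover g′ is continuously differentiable on (0,∞), g″ is bounded on (0,∞), and x³·g″(x) → 0 as x → ∞. -/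
open MeasureTheory Set Filter Real

/-!
With `t = log x`, `b = 1/(2σ²)` and `c = 1/(σ√(2π))`, the density is `g = c e^{-t - b t²}`, and
`g' = -c (1 + 2bt) e^{-2t - b t²}`, `g'' = c P(t) e^{-3t - b t²}` with
`P(t) = (1 + 2bt)(2 + 2bt) - 2b`. A quadratic polynomial in `t` times `e^{-kt - b t²}` is continuous
and vanishes at `±∞` (`tendsto_quad_mul_exp`); this gives the limits at `0⁺` and at `∞` and the
boundedness of `g''`.

For the hazard rates, the comparison principle `le_mul_tail` says that `f ≤ M Ḡ` as soon as
`f → 0` at `∞` and `-f' ≤ M g`. It is applied to `f = g` and to `f = g'`: the ratios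
`-g'/g = (1 + 2bt) e^{-t}` and `-g''/g = -P(t) e^{-2t}` are bounded above on the whole half-line
(`hazard_bound_one`, `hazard_bound_two`), although they are unbounded below near `0`. This yields
`g ≤ M Ḡ` and `g' ≤ M Ḡ`, and the remaining bound is `-g' ≤ M g ≤ M² Ḡ`.
-/

namespace LognormalHazard

/-- The function `x ↦ e^{-kt - b t²}` in the variable `t = log x`. -/
noncomputable def E (b k x : ℝ) : ℝ := exp (-k * log x - b * log x ^ 2)

lemma E_pos (b k x : ℝ) : 0 < E b k x := exp_pos _

lemma hasDerivAt_E (b k : ℝ) {x : ℝ} (hx : 0 < x) :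
    HasDerivAt (E b k) (-(k + 2 * b * log x) * E b (k + 1) x) x := by
  have hl := hasDerivAt_log hx.ne'
  have h := ((hl.const_mul (-k)).sub ((hl.pow 2).const_mul b)).exp
  have e : E b (k + 1) x = exp (-k * log x - b * log x ^ 2) * x⁻¹ := by
    rw [E, ← exp_log (inv_pos.2 hx), ← exp_add, log_inv]
    ring_nf
  refine HasDerivAt.congr_deriv (f := E b k) h ?_
  rw [e]
  simp
  ring

lemma tendsto_quad_mul_exp {b : ℝ} (hb : 0 < b) (k A B D : ℝ) :
    Tendsto (fun t : ℝ => (A + B * t + D * t ^ 2) * exp (-k * t - b * t ^ 2))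
      (cocompact ℝ) (nhds 0) := by
  have hb2 : 0 < b / 2 := by positivity
  have h0 := tendsto_rpow_abs_mul_exp_neg_mul_sq_cocompact hb2 0
  have h1 := tendsto_rpow_abs_mul_exp_neg_mul_sq_cocompact hb2 1
  have h2 := tendsto_rpow_abs_mul_exp_neg_mul_sq_cocompact hb2 2
  have h := (((h0.const_mul |A|).add (h1.const_mul |B|)).add (h2.const_mul |D|)).const_mul
    (exp (k ^ 2 / (2 * b)))
  simp only [mul_zero, add_zero] at h
  refine squeeze_zero_norm (fun t => ?_) h
  rw [norm_mul, norm_eq_abs, norm_eq_abs, abs_of_pos (exp_pos _)]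
  have e1 : |A + B * t + D * t ^ 2| ≤ |A| + |B| * |t| + |D| * |t| ^ 2 := by
    calc _ ≤ |A| + |B * t| + |D * t ^ 2| := abs_add_three _ _ _
      _ = _ := by rw [abs_mul, abs_mul, abs_pow]
  -- Completing the square trades the linear term for half of the quadratic one.
  have e2 : exp (-k * t - b * t ^ 2) ≤ exp (k ^ 2 / (2 * b)) * exp (-(b / 2) * t ^ 2) := by
    rw [← exp_add]
    apply exp_le_exp.2
    have : k ^ 2 / (2 * b) + -(b / 2) * t ^ 2 - (-k * t - b * t ^ 2)
        = b / 2 * (t + k / b) ^ 2 := by field_simp; ring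
    have : 0 ≤ b / 2 * (t + k / b) ^ 2 := by positivity
    linarith
  calc _ ≤ (|A| + |B| * |t| + |D| * |t| ^ 2) *
        (exp (k ^ 2 / (2 * b)) * exp (-(b / 2) * t ^ 2)) := by gcongr
    _ = _ := by
      rw [rpow_zero, rpow_one, rpow_two]
      ring

lemma bounded_quad_mul_exp {b : ℝ} (hb : 0 < b) (k A B D : ℝ) :
    ∃ M : ℝ, ∀ t : ℝ, |(A + B * t + D * t ^ 2) * exp (-k * t - b * t ^ 2)| ≤ M := by
  let f : ZeroAtInftyContinuousMap ℝ ℝ :=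
    ⟨⟨fun t : ℝ => (A + B * t + D * t ^ 2) * exp (-k * t - b * t ^ 2), by fun_prop⟩,
      tendsto_quad_mul_exp hb k A B D⟩
  exact ⟨‖f.toBCF‖, fun t => f.toBCF.norm_coe_le_norm t⟩

lemma tendsto_quad_mul_E_zero {b : ℝ} (hb : 0 < b) (k A B D : ℝ) :
    Tendsto (fun x => (A + B * log x + D * log x ^ 2) * E b k x)
      (nhdsWithin 0 (Ioi 0)) (nhds 0) :=
  ((tendsto_quad_mul_exp hb k A B D).mono_left atBot_le_cocompact).comp
    tendsto_log_nhdsGT_zero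

lemma tendsto_quad_mul_E_atTop {b : ℝ} (hb : 0 < b) (k A B D : ℝ) :
    Tendsto (fun x => (A + B * log x + D * log x ^ 2) * E b k x) atTop (nhds 0) :=
  ((tendsto_quad_mul_exp hb k A B D).mono_left atTop_le_cocompact).comp tendsto_log_atTop

lemma pow_mul_E (b k : ℝ) (n : ℕ) {x : ℝ} (hx : 0 < x) : x ^ n * E b k x = E b (k - n) x := by
  rw [E, E, ← exp_log (pow_pos hx n), ← exp_add, log_pow]
  ring_nf

lemma integrableOn_E_one {b : ℝ} (hb : 0 < b) : IntegrableOn (E b 1) (Ioi 0) := by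
  obtain ⟨M₁, h₁⟩ := bounded_quad_mul_exp hb 1 1 0 0
  obtain ⟨M₂, h₂⟩ := bounded_quad_mul_exp hb (1 - (2 : ℕ)) 1 0 0
  have hm : Measurable (E b 1) := by unfold E; fun_prop
  refine Integrable.mono' (g := fun x => (M₁ + M₂) * (1 + x ^ 2)⁻¹)
    (integrable_inv_one_add_sq.const_mul _).integrableOn hm.aestronglyMeasurable ?_
  refine (ae_restrict_iff' measurableSet_Ioi).2 (ae_of_all _ fun x hx => ?_)
  have k1 : E b 1 x ≤ M₁ := by simpa [E] using le_of_abs_le (h₁ (log x))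
  have k2 : x ^ 2 * E b 1 x ≤ M₂ := by
    rw [pow_mul_E b 1 2 hx]
    simpa [E] using le_of_abs_le (h₂ (log x))
  rw [norm_eq_abs, abs_of_pos (E_pos _ _ _), ← div_eq_mul_inv, le_div_iff₀ (by positivity)]
  linarith

/-- Comparison principle for tails: integrating `-f' ≤ M g` over `(x, y)` and letting `y → ∞`
bounds `f x` by `M` times the tail of `g`. -/
lemma le_mul_tail {f f' g : ℝ → ℝ} {M : ℝ} (hM : 0 ≤ M)
    (hf : ∀ x > 0, HasDerivAt f (f' x) x) (hlim : Tendsto f atTop (nhds 0))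
    (hg : IntegrableOn g (Ioi 0)) (hg0 : ∀ x > 0, 0 ≤ g x)
    (hle : ∀ x > 0, -f' x ≤ M * g x) {x : ℝ} (hx : 0 < x) :
    f x ≤ M * ∫ u in Ioi x, g u := by
  have hgx : IntegrableOn g (Ioi x) := hg.mono_set (Ioi_subset_Ioi hx.le)
  have key : ∀ᶠ y in atTop, f x - f y ≤ M * ∫ u in Ioi x, g u := by
    filter_upwards [eventually_ge_atTop x] with y hxy
    have h1 := intervalIntegral.sub_le_integral_of_hasDeriv_right_of_le (g := fun z => -f z)
      (g' := fun z => -f' z) (φ := fun z => M * g z) hxy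
      (fun z hz => (hf z (hx.trans_le hz.1)).neg.continuousAt.continuousWithinAt)
      (fun z hz => (hf z (hx.trans hz.1)).neg.hasDerivWithinAt)
      (((hg.mono_set fun z hz => hx.trans_le hz.1).const_mul M))
      (fun z hz => hle z (hx.trans hz.1))
    rw [intervalIntegral.integral_const_mul, intervalIntegral.integral_of_le hxy] at h1
    have h2 : ∫ u in Ioc x y, g u ≤ ∫ u in Ioi x, g u :=
      setIntegral_mono_set hgx
        ((ae_restrict_iff' measurableSet_Ioi).2 (ae_of_all _ fun z hz => hg0 z (hx.trans hz)))
        (LE.le.eventuallyLE Ioc_subset_Ioi_self)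
    have h3 := mul_le_mul_of_nonneg_left h2 hM
    linarith
  have := le_of_tendsto (hlim.const_sub (f x)) key
  simpa using this

/-- Upper bound for `-g'/g`, cleared of denominators and of the constant `c`. -/
lemma hazard_bound_one {b : ℝ} (hb : 0 < b) {x : ℝ} :
    (1 + 2 * b * log x) * E b 2 x ≤ 2 * b * exp (1 / (2 * b)) * E b 1 x := by
  have e : E b 1 x = exp (log x) * E b 2 x := by
    rw [E, E, ← exp_add]; ring_nf
  -- `e^u ≥ u` at `u = t + 1/(2b)`.
  have h := add_one_le_exp (1 / (2 * b) + log x)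
  rw [exp_add] at h
  have h2 : 1 + 2 * b * log x ≤ 2 * b * (exp (1 / (2 * b)) * exp (log x)) := by
    calc 1 + 2 * b * log x = 2 * b * (1 / (2 * b) + log x) := by field_simp
      _ ≤ _ := by gcongr; linarith
  rw [e]
  calc _ ≤ 2 * b * (exp (1 / (2 * b)) * exp (log x)) * E b 2 x :=
        mul_le_mul_of_nonneg_right h2 (E_pos _ _ _).le
    _ = _ := by ring

/-- Upper bound for `-g''/g`, cleared of denominators and of the constant `c`. -/
lemma hazard_bound_two {b : ℝ} (hb : 0 < b) {x : ℝ} :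
    -(((1 + 2 * b * log x) * (2 + 2 * b * log x) - 2 * b) * E b 3 x)
      ≤ b * exp (2 * (1 / b + 1)) * E b 1 x := by
  have e : E b 1 x = exp (2 * log x) * E b 3 x := by
    rw [E, E, ← exp_add]; ring_nf
  -- `2bt + 2 + 2b + P(t)` is the square `(2bt + 2)²`, and `e^u ≥ u` at `u = 2(t + 1/b + 1)`.
  have h := add_one_le_exp (2 * (1 / b + 1) + 2 * log x)
  rw [exp_add] at h
  have h2 : -((1 + 2 * b * log x) * (2 + 2 * b * log x) - 2 * b)
      ≤ b * (exp (2 * (1 / b + 1)) * exp (2 * log x)) := by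
    calc _ ≤ 2 * b * log x + 2 + 2 * b := by nlinarith [sq_nonneg (2 * b * log x + 2)]
      _ = b * (2 * (1 / b + 1) + 2 * log x) := by field_simp; ring
      _ ≤ _ := by gcongr; linarith
  rw [e]
  calc _ = -((1 + 2 * b * log x) * (2 + 2 * b * log x) - 2 * b) * E b 3 x := by ring
    _ ≤ b * (exp (2 * (1 / b + 1)) * exp (2 * log x)) * E b 3 x :=
        mul_le_mul_of_nonneg_right h2 (E_pos _ _ _).le
    _ = _ := by ring

end LognormalHazard

open LognormalHazard in
/-- Boundedness of the hazard rate of the log-normal distribution with location `0` and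
scale `σ > 0`: with density `g(x) = (1/(xσ√(2π))) e^{-(log x)²/(2σ²)}` and survival
function `Ḡ(x) = ∫_x^∞ g`, the density `g` is `C¹` on `(0,∞)`, `g` and `g'` tend to `0`
at `0⁺`, the ratios `g/Ḡ` and `|g'|/Ḡ` are bounded on `(0,∞)`, `g'` is `C¹`, `g''` is
bounded, and `x³ g''(x) → 0` as `x → ∞`. -/
theorem lognormal_hazard_bounded (σ : ℝ) (hσ : 0 < σ) :
    let g : ℝ → ℝ := fun x => (1 / (x * σ * Real.sqrt (2 * π))) *
      Real.exp (-(Real.log x) ^ 2 / (2 * σ ^ 2))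
    let Gbar : ℝ → ℝ := fun x => ∫ u in Ioi x, g u
    ContDiffOn ℝ 2 g (Ioi 0) ∧
    Tendsto g (nhdsWithin 0 (Ioi 0)) (nhds 0) ∧
    Tendsto (deriv g) (nhdsWithin 0 (Ioi 0)) (nhds 0) ∧
    (∃ M : ℝ, ∀ x > (0:ℝ), |g x / Gbar x| ≤ M ∧ |deriv g x| / Gbar x ≤ M) ∧
    (∃ M : ℝ, ∀ x > (0:ℝ), |deriv (deriv g) x| ≤ M) ∧
    Tendsto (fun x => x ^ 3 * deriv (deriv g) x) atTop (nhds 0) := by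
  intro g Gbar
  obtain ⟨b, hbdef⟩ : ∃ b : ℝ, b = 1 / (2 * σ ^ 2) := ⟨_, rfl⟩
  obtain ⟨c, hcdef⟩ : ∃ c : ℝ, c = 1 / (σ * sqrt (2 * π)) := ⟨_, rfl⟩
  have hb : 0 < b := by rw [hbdef]; positivity
  have hc : 0 < c := by rw [hcdef]; positivity
  have hg : ∀ x > 0, g x = c * E b 1 x := by
    intro x hx
    have e : E b 1 x = x⁻¹ * exp (-(log x) ^ 2 / (2 * σ ^ 2)) := by
      rw [E, ← exp_log (inv_pos.2 hx), ← exp_add, log_inv, hbdef]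
      ring_nf
    rw [e, hcdef]
    simp only [g]
    field_simp
  have hgpos : ∀ x > 0, 0 < g x := fun x hx => by
    rw [hg x hx]; exact mul_pos hc (E_pos _ _ _)
  have hev : ∀ x > (0 : ℝ), ∀ᶠ y in nhds x, 0 < y := fun x hx => lt_mem_nhds hx
  have hd : ∀ x > 0, HasDerivAt g (-c * ((1 + 2 * b * log x) * E b 2 x)) x := by
    intro x hx
    have h := (hasDerivAt_E b 1 hx).const_mul c
    rw [one_add_one_eq_two] at h
    refine (h.congr_of_eventuallyEq ((hev x hx).mono hg)).congr_deriv ?_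
    ring
  have hd' : ∀ x > 0, deriv g x = -c * ((1 + 2 * b * log x) * E b 2 x) :=
    fun x hx => (hd x hx).deriv
  have hdd : ∀ x > 0, HasDerivAt (deriv g)
      (c * (((1 + 2 * b * log x) * (2 + 2 * b * log x) - 2 * b) * E b 3 x)) x := by
    intro x hx
    have h := (((((hasDerivAt_log hx.ne').const_mul (2 * b)).const_add 1).mul
      (hasDerivAt_E b 2 hx))).const_mul (-c)
    refine (h.congr_of_eventuallyEq ((hev x hx).mono hd')).congr_deriv ?_
    have e : x⁻¹ * E b 2 x = E b 3 x := by
      have := pow_mul_E b 3 1 hx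
      norm_num at this
      rw [← this]
      field_simp
    have e3 : (2 : ℝ) + 1 = 3 := by norm_num
    rw [e3, ← e]
    ring
  have hdd' : ∀ x > 0, deriv (deriv g) x
      = c * (((1 + 2 * b * log x) * (2 + 2 * b * log x) - 2 * b) * E b 3 x) :=
    fun x hx => (hdd x hx).deriv
  refine ⟨?_, ?_, ?_, ?_, ?_, ?_⟩
  · have hE : ContDiffOn ℝ 2 (fun x => c * E b 1 x) (Ioi 0) := by
      have hl : ContDiffOn ℝ 2 log (Ioi 0) :=
        contDiffOn_log.mono fun x hx => (mem_Ioi.1 hx).ne'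
      exact contDiffOn_const.mul
        ((contDiffOn_const.mul hl).sub (contDiffOn_const.mul (hl.pow 2))).exp
    exact hE.congr hg
  · have h := (tendsto_quad_mul_E_zero hb 1 c 0 0)
    refine h.congr' ?_
    filter_upwards [self_mem_nhdsWithin] with x hx
    rw [hg x hx]; ring
  · have h := (tendsto_quad_mul_E_zero hb 2 (-c) (-c * (2 * b)) 0)
    refine h.congr' ?_
    filter_upwards [self_mem_nhdsWithin] with x hx
    rw [hd' x hx]; ring
  · have hint : IntegrableOn g (Ioi 0) :=
      IntegrableOn.congr_fun ((integrableOn_E_one hb).const_mul c)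
        (fun x hx => (hg x hx).symm) measurableSet_Ioi
    have lim0 : Tendsto g atTop (nhds 0) := by
      refine (tendsto_quad_mul_E_atTop hb 1 c 0 0).congr' ?_
      filter_upwards [eventually_gt_atTop 0] with x hx
      rw [hg x hx]; ring
    have lim1 : Tendsto (deriv g) atTop (nhds 0) := by
      refine (tendsto_quad_mul_E_atTop hb 2 (-c) (-c * (2 * b)) 0).congr' ?_
      filter_upwards [eventually_gt_atTop 0] with x hx
      rw [hd' x hx]; ring
    obtain ⟨M₁, hM₁⟩ : ∃ M, M = 2 * b * exp (1 / (2 * b)) := ⟨_, rfl⟩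
    obtain ⟨M₂, hM₂⟩ : ∃ M, M = b * exp (2 * (1 / b + 1)) := ⟨_, rfl⟩
    have p1 : 0 < M₁ := by rw [hM₁]; positivity
    have p2 : 0 < M₂ := by rw [hM₂]; positivity
    have c1 : ∀ x > 0, -deriv g x ≤ M₁ * g x := by
      intro x hx
      have := mul_le_mul_of_nonneg_left (hazard_bound_one hb (x := x)) hc.le
      rw [hd' x hx, hg x hx, hM₁]
      linarith
    have c2 : ∀ x > 0, -deriv (deriv g) x ≤ M₂ * g x := by
      intro x hx
      have := mul_le_mul_of_nonneg_left (hazard_bound_two hb (x := x)) hc.le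
      rw [hdd' x hx, hg x hx, hM₂]
      linarith
    have b1 : ∀ x > 0, g x ≤ M₁ * Gbar x := fun x hx =>
      le_mul_tail p1.le (fun x hx => (hd x hx).differentiableAt.hasDerivAt) lim0 hint
        (fun x hx => (hgpos x hx).le) c1 hx
    have b2 : ∀ x > 0, deriv g x ≤ M₂ * Gbar x := fun x hx =>
      le_mul_tail p2.le (fun x hx => (hdd x hx).differentiableAt.hasDerivAt) lim1 hint
        (fun x hx => (hgpos x hx).le) c2 hx
    refine ⟨M₁ + M₂ + M₁ * M₁, fun x hx => ?_⟩
    have hG : 0 < Gbar x := pos_of_mul_pos_right ((hgpos x hx).trans_le (b1 x hx)) p1.le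
    have q1 : 0 < M₁ * Gbar x := mul_pos p1 hG
    have q2 : 0 < M₂ * Gbar x := mul_pos p2 hG
    have q3 : 0 < M₁ * (M₁ * Gbar x) := mul_pos p1 q1
    constructor
    · rw [abs_of_pos (div_pos (hgpos x hx) hG), div_le_iff₀ hG]
      linarith [b1 x hx]
    · rw [div_le_iff₀ hG, abs_le]
      have := mul_le_mul_of_nonneg_left (b1 x hx) p1.le
      constructor
      · linarith [c1 x hx]
      · linarith [b2 x hx]
  · obtain ⟨M, hM⟩ := bounded_quad_mul_exp hb 3 (c * (2 - 2 * b)) (c * (6 * b))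
      (c * (4 * b ^ 2))
    refine ⟨M, fun x hx => ?_⟩
    rw [hdd' x hx]
    refine le_of_eq_of_le ?_ (hM (log x))
    rw [E]
    ring_nf
  · refine (tendsto_quad_mul_E_atTop hb 0 (c * (2 - 2 * b)) (c * (6 * b))
      (c * (4 * b ^ 2))).congr' ?_
    filter_upwards [eventually_gt_atTop 0] with x hx
    have e : E b 0 x = x ^ 3 * E b 3 x := by
      rw [pow_mul_E b 3 3 hx]; norm_num
    rw [hdd' x hx, e]
    ring
end
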